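/- Let $X \geq 2$, $l \geq 0$ be integers, $\eta > 0$, and let $F(\boldsymbol{x}) = x_1^2 + x_2^2 + x_3^2$. Then the tail sum $S_2 = \sum_{k > X^{\eta}} \sum_{\substack{\boldsymbol{m}, \boldsymbol{n} \in \mathbf{Z}^3 \\ |\boldsymbol{m}|^2 \leq 2(X+l),\, |\boldsymbol{n}|^2 \leq 2X \\ k^2 \mid F(\boldsymbol{n}) \\ F(\boldsymbol{m}) - F(\boldsymbol{n}) = l}} 1$ satisfies $S_2 \ll_\varepsilon X^{3/2 - \eta} (X+l)^{1/2 + \varepsilon}$ for every $\varepsilon > 0$. -/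

import Mathlib

open Finset

/-- The sum of three squares form. -/
def F3 (x : Fin 3 → ℤ) : ℤ := x 0 ^ 2 + x 1 ^ 2 + x 2 ^ 2

theorem Finset.card_le_mul_of_card_fiber_le {α β : Type*} [DecidableEq β] (s : Finset α)
    (f : α → β) {a b : ℝ} (hb : 0 ≤ b) (himage : ((s.image f).card : ℝ) ≤ a)
    (hfiber : ∀ y ∈ s.image f, ((s.filter (fun x => f x = y)).card : ℝ) ≤ b) :
    (s.card : ℝ) ≤ a * b := by
  rw [Finset.card_eq_sum_card_image f s, Nat.cast_sum]
  calc _ ≤ ∑ y ∈ s.image f, b := Finset.sum_le_sum hfiber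
    _ = (s.image f).card * b := by simp
    _ ≤ a * b := by gcongr

namespace GaussianInt

theorem exists_eq_pow_mul_star_pow_mul {p : ℕ} {π : GaussianInt} (hπ : Prime π)
    (hp : p ≠ 0) (hnorm : π.norm = p) (a : ℕ) (M : ℤ) (z : GaussianInt)
    (hz : z.norm = p ^ a * M) :
    ∃ b ≤ a, ∃ w : GaussianInt, w.norm = M ∧ z = π ^ b * star π ^ (a - b) * w := by
  induction a generalizing z with
  | zero => exact ⟨0, le_rfl, z, by simpa using hz, by simp⟩
  | succ a ih =>
    have hp' : (p : ℤ) ≠ 0 := by exact_mod_cast hp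
    have hdvd : π ∣ z * star z := by
      rw [← Zsqrtd.norm_eq_mul_conj, hz, pow_succ', mul_assoc, ← hnorm]
      push_cast
      rw [Zsqrtd.norm_eq_mul_conj, mul_assoc]
      exact dvd_mul_right _ _
    rcases hπ.dvd_or_dvd hdvd with ⟨y, rfl⟩ | ⟨y, hy⟩
    · have hynorm : y.norm = p ^ a * M := by
        rw [Zsqrtd.norm_mul, hnorm, pow_succ', mul_assoc] at hz
        exact mul_left_cancel₀ hp' hz
      obtain ⟨b, hb, w, hw, rfl⟩ := ih y hynorm
      refine ⟨b + 1, by omega, w, hw, ?_⟩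
      rw [Nat.add_sub_add_right]
      ring
    · have hzy : z = star π * star y := by
        rw [← star_star z, hy, star_mul, mul_comm]
      have hynorm : (star y).norm = p ^ a * M := by
        rw [hzy, Zsqrtd.norm_mul, Zsqrtd.norm_conj π, hnorm, pow_succ', mul_assoc] at hz
        exact mul_left_cancel₀ hp' hz
      obtain ⟨b, hb, w, hw, hyw⟩ := ih (star y) hynorm
      refine ⟨b, by omega, w, hw, ?_⟩
      rw [hzy, hyw, Nat.sub_add_comm hb]
      ring

theorem exists_eq_natCast_pow_mul {p : ℕ} (hp : Prime (p : GaussianInt)) (a : ℕ) (M : ℤ)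
    (hM : ¬ (p : ℤ) ∣ M) (z : GaussianInt) (hz : z.norm = p ^ a * M) :
    ∃ w : GaussianInt, w.norm = M ∧ z = (p : GaussianInt) ^ (a / 2) * w := by
  induction a using Nat.strong_induction_on generalizing z with
  | _ a ih =>
    rcases Nat.eq_zero_or_pos a with rfl | ha
    · exact ⟨z, by simpa using hz, by simp⟩
    have hp0 : (p : ℤ) ≠ 0 := by
      intro h
      apply hp.ne_zero
      exact_mod_cast h
    have hdvd : (p : GaussianInt) ∣ z * star z := by
      rw [← Zsqrtd.norm_eq_mul_conj, hz]
      push_cast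
      exact (dvd_pow_self _ ha.ne').mul_right _
    have hdvd' : (p : GaussianInt) ∣ z := by
      rcases hp.dvd_or_dvd hdvd with h | ⟨y, hy⟩
      · exact h
      · refine ⟨star y, ?_⟩
        rw [← star_star z, hy, star_mul, mul_comm, star_natCast]
    obtain ⟨y, rfl⟩ := hdvd'
    rw [Zsqrtd.norm_mul, Zsqrtd.norm_natCast] at hz
    match a, ha with
    | 1, _ =>
      refine (hM ⟨y.norm, ?_⟩).elim
      apply mul_left_cancel₀ hp0
      linear_combination -hz
    | a + 2, _ =>
      obtain ⟨w, hw, rfl⟩ := ih a (by omega) y (by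
        apply mul_left_cancel₀ (mul_ne_zero hp0 hp0)
        linear_combination hz)
      refine ⟨w, hw, ?_⟩
      rw [Nat.add_div_right _ two_pos]
      ring

theorem exists_finset_forall_norm_eq_pow_mul {p : ℕ} (hp : p.Prime) (a : ℕ) :
    ∃ D : Finset GaussianInt, D.card ≤ a + 1 ∧ ∀ (M : ℤ) (z : GaussianInt), ¬ (p : ℤ) ∣ M →
      z.norm = p ^ a * M → ∃ d ∈ D, ∃ w : GaussianInt, w.norm = M ∧ z = d * w := by
  classical
  have := Fact.mk hp
  by_cases hpi : Prime (p : GaussianInt)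
  · refine ⟨{(p : GaussianInt) ^ (a / 2)}, by simp, fun M z hM hz => ?_⟩
    obtain ⟨w, hw, h⟩ := exists_eq_natCast_pow_mul hpi a M hM z hz
    exact ⟨_, by simp, w, hw, h⟩
  · obtain ⟨x, y, hxy⟩ := sq_add_sq_of_nat_prime_of_not_irreducible p
      (fun h => hpi h.prime)
    set π : GaussianInt := ⟨x, y⟩ with hπdef
    have hnorm : π.norm = p := by
      rw [← hxy, Zsqrtd.norm_def]
      push_cast
      simp only [hπdef]
      ring
    have hirr : Irreducible π := by
      refine ⟨fun h => ?_, fun u v huv => ?_⟩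
      · rw [← Zsqrtd.norm_eq_one_iff, hnorm] at h
        exact hp.one_lt.ne' (by simpa using h)
      · have h : u.norm.natAbs * v.norm.natAbs = p := by
          rw [← Int.natAbs_mul, ← Zsqrtd.norm_mul, ← huv, hnorm, Int.natAbs_natCast]
        rw [← Zsqrtd.norm_eq_one_iff, ← Zsqrtd.norm_eq_one_iff]
        rcases (Nat.dvd_prime hp).1 ⟨_, h.symm⟩ with h1 | h1
        · exact Or.inl h1
        · right
          rw [h1] at h
          exact Nat.eq_of_mul_eq_mul_left hp.pos (by simpa using h)
    refine ⟨(Finset.range (a + 1)).image (fun b => π ^ b * star π ^ (a - b)),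
      Finset.card_image_le.trans (by simp), fun M z _ hz => ?_⟩
    obtain ⟨b, hb, w, hw, h⟩ :=
      exists_eq_pow_mul_star_pow_mul hirr.prime hp.ne_zero hnorm a M z hz
    exact ⟨_, Finset.mem_image_of_mem _ (by simpa using Nat.lt_succ_of_le hb), w, hw, h⟩

theorem exists_finset_forall_norm_eq (N : ℕ) (hN : N ≠ 0) :
    ∃ S : Finset GaussianInt, S.card ≤ 9 * N.divisors.card ∧
      ∀ z : GaussianInt, z.norm = N → z ∈ S := by
  classical
  induction N using Nat.recOnPrimePow with
  | zero => exact (hN rfl).elim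
  | one =>
    refine ⟨(Finset.Icc (-1 : ℤ) 1 ×ˢ Finset.Icc (-1 : ℤ) 1).image (fun q => ⟨q.1, q.2⟩),
      Finset.card_image_le.trans (by simp), fun z hz => ?_⟩
    rw [Zsqrtd.norm_def] at hz
    push_cast at hz
    refine Finset.mem_image.2 ⟨(z.re, z.im), ?_, rfl⟩
    simp only [Finset.mem_product, Finset.mem_Icc]
    refine ⟨⟨?_, ?_⟩, ?_, ?_⟩ <;> nlinarith [mul_self_nonneg z.re, mul_self_nonneg z.im]
  | prime_pow_mul M p a hp hpM ha ih =>
    obtain ⟨S, hS, hmem⟩ := ih (right_ne_zero_of_mul hN)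
    obtain ⟨D, hD, hDmem⟩ := exists_finset_forall_norm_eq_pow_mul hp a
    refine ⟨(D ×ˢ S).image (fun q => q.1 * q.2), ?_, fun z hz => ?_⟩
    · have hcop : (p ^ a).Coprime M := ((Nat.Prime.coprime_iff_not_dvd hp).2 hpM).pow_left a
      have hpow : (p ^ a).divisors.card = a + 1 := by
        rw [Nat.divisors_prime_pow hp]
        simp
      rw [hcop.card_divisors_mul, hpow]
      calc _ ≤ D.card * S.card := Finset.card_image_le.trans (Finset.card_product _ _).le
        _ ≤ (a + 1) * (9 * M.divisors.card) := Nat.mul_le_mul hD hS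
        _ = _ := by ring
    · obtain ⟨d, hd, w, hw, rfl⟩ := hDmem M z (by exact_mod_cast hpM) (by exact_mod_cast hz)
      exact Finset.mem_image.2 ⟨(d, w), Finset.mem_product.2 ⟨hd, hmem w hw⟩, rfl⟩

end GaussianInt

theorem Nat.card_divisors_le_const_mul_rpow {ε : ℝ} (hε : 0 < ε) :
    ∃ C : ℝ, 0 < C ∧ ∀ n : ℕ, n ≠ 0 → (n.divisors.card : ℝ) ≤ C * (n : ℝ) ^ ε := by
  set K : ℝ := 1 + 1 / (ε * Real.log 2) with hK
  have hlog : 0 < Real.log 2 := Real.log_pos one_lt_two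
  have hK1 : 1 ≤ K := by
    have : 0 < 1 / (ε * Real.log 2) := by positivity
    linarith
  set P : ℕ := ⌈(2 : ℝ) ^ (1 / ε)⌉₊ with hP
  set c : ℕ → ℝ := fun p => if p < P then K else 1 with hc
  have hlocal : ∀ p a : ℕ, 2 ≤ p → (a : ℝ) + 1 ≤ c p * ((p : ℝ) ^ a) ^ ε := by
    intro p a hp
    have hp' : (2 : ℝ) ≤ p := by exact_mod_cast hp
    have hcomm : ((p : ℝ) ^ a) ^ ε = ((p : ℝ) ^ ε) ^ a := by
      rw [← Real.rpow_natCast, ← Real.rpow_mul (by positivity), mul_comm,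
        Real.rpow_mul (by positivity), Real.rpow_natCast]
    by_cases h : p < P
    · simp only [hc, if_pos h]
      have h2 : 1 + (a : ℝ) * (ε * Real.log 2) ≤ ((p : ℝ) ^ a) ^ ε := by
        calc 1 + (a : ℝ) * (ε * Real.log 2)
            ≤ Real.exp ((a : ℝ) * (ε * Real.log 2)) := by
              linarith [Real.add_one_le_exp ((a : ℝ) * (ε * Real.log 2))]
          _ = ((2 : ℝ) ^ a) ^ ε := by
              rw [Real.rpow_def_of_pos (by positivity), Real.log_pow]
              ring_nf
          _ ≤ _ := by gcongr
      have h3 : (1 : ℝ) ≤ ((p : ℝ) ^ a) ^ ε := by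
        have : 0 ≤ (a : ℝ) * (ε * Real.log 2) := by positivity
        linarith
      have h4 : (a : ℝ) = 1 / (ε * Real.log 2) * (a * (ε * Real.log 2)) := by
        field_simp
      have h5 : 1 / (ε * Real.log 2) * (a * (ε * Real.log 2)) ≤
          1 / (ε * Real.log 2) * ((p : ℝ) ^ a) ^ ε := by
        gcongr
        linarith
      rw [hK, add_mul, one_mul]
      linarith
    · simp only [hc, if_neg h, one_mul]
      have h1 : (2 : ℝ) ≤ (p : ℝ) ^ ε := by
        have : (2 : ℝ) ^ (1 / ε) ≤ p := (Nat.le_ceil _).trans (by exact_mod_cast not_lt.1 h)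
        calc (2 : ℝ) = ((2 : ℝ) ^ (1 / ε)) ^ ε := by
              rw [← Real.rpow_mul (by norm_num), one_div_mul_cancel hε.ne', Real.rpow_one]
          _ ≤ _ := by gcongr
      rw [hcomm]
      calc (a : ℝ) + 1 ≤ (2 : ℝ) ^ a := by exact_mod_cast Nat.lt_two_pow_self
        _ ≤ _ := by gcongr
  refine ⟨K ^ P, by positivity, fun n hn => ?_⟩
  have hprod : ((n : ℝ)) ^ ε = ∏ p ∈ n.primeFactors, ((p : ℝ) ^ n.factorization p) ^ ε := by
    rw [Real.finsetProd_rpow _ _ (fun _ _ => by positivity)]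
    congr 1
    exact_mod_cast (Nat.prod_factorization_pow_eq_self hn).symm
  have hcprod : ∏ p ∈ n.primeFactors, c p ≤ K ^ P := by
    rw [Finset.prod_ite, Finset.prod_const, Finset.prod_const_one, mul_one]
    refine pow_le_pow_right₀ hK1 ?_
    calc _ ≤ (Finset.range P).card := Finset.card_le_card fun p hp => by
            simpa using (Finset.mem_filter.1 hp).2
      _ = P := Finset.card_range P
  rw [Nat.card_divisors hn, Nat.cast_prod, hprod]
  calc _ ≤ ∏ p ∈ n.primeFactors, (c p * ((p : ℝ) ^ n.factorization p) ^ ε) := by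
        refine Finset.prod_le_prod (fun _ _ => by positivity) fun p hp => ?_
        push_cast
        exact hlocal p _ (Nat.prime_of_mem_primeFactors hp).two_le
    _ = (∏ p ∈ n.primeFactors, c p) * ∏ p ∈ n.primeFactors, ((p : ℝ) ^ n.factorization p) ^ ε :=
        Finset.prod_mul_distrib
    _ ≤ _ := by gcongr

theorem card_sum_two_sq_eq_le {ε : ℝ} (hε : 0 < ε) :
    ∃ C : ℝ, 0 < C ∧ ∀ (B : ℕ) (N : ℤ), 1 ≤ B → N ≤ B →
      ∀ T : Finset (ℤ × ℤ), (∀ q ∈ T, q.1 ^ 2 + q.2 ^ 2 = N) →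
        (T.card : ℝ) ≤ C * (B : ℝ) ^ ε := by
  obtain ⟨C, hC, hdiv⟩ := Nat.card_divisors_le_const_mul_rpow hε
  refine ⟨9 * C + 1, by positivity, fun B N hB hNB T hT => ?_⟩
  have hB1 : (1 : ℝ) ≤ (B : ℝ) ^ ε := Real.one_le_rpow (by exact_mod_cast hB) hε.le
  rcases lt_trichotomy N 0 with hN | rfl | hN
  · have : T = ∅ := Finset.eq_empty_of_forall_notMem fun q hq => by
      nlinarith [hT q hq, sq_nonneg q.1, sq_nonneg q.2]
    rw [this, Finset.card_empty, Nat.cast_zero]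
    positivity
  · have hsub : T ⊆ {(0, 0)} := fun q hq => by
      have h := hT q hq
      have h1 : q.1 = 0 := by nlinarith [sq_nonneg q.1, sq_nonneg q.2]
      have h2 : q.2 = 0 := by nlinarith [sq_nonneg q.1, sq_nonneg q.2]
      simp [Prod.ext_iff, h1, h2]
    have hcard : (T.card : ℝ) ≤ 1 := by exact_mod_cast Finset.card_le_card hsub
    have : 0 ≤ 9 * C * (B : ℝ) ^ ε := by positivity
    linarith
  · lift N to ℕ using hN.le
    have hN0 : N ≠ 0 := by
      rintro rfl
      exact hN.ne rfl
    obtain ⟨S, hS, hmem⟩ := GaussianInt.exists_finset_forall_norm_eq N hN0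
    have hTS : T.card ≤ S.card := by
      refine Finset.card_le_card_of_injOn (fun q => (⟨q.1, q.2⟩ : GaussianInt))
        (fun q hq => hmem _ ?_) (fun q _ q' _ h => ?_)
      · rw [Zsqrtd.norm_def, ← hT q hq]
        ring
      · rw [Zsqrtd.ext_iff] at h
        exact Prod.ext h.1 h.2
    have hNB' : (N : ℝ) ≤ B := by exact_mod_cast hNB
    calc (T.card : ℝ) ≤ 9 * N.divisors.card := by exact_mod_cast hTS.trans hS
      _ ≤ 9 * (C * (N : ℝ) ^ ε) := by gcongr; exact hdiv N hN0
      _ ≤ 9 * (C * (B : ℝ) ^ ε) := by gcongr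
      _ ≤ _ := by linarith

theorem card_F3_eq_le {ε : ℝ} (hε : 0 < ε) :
    ∃ C : ℝ, 0 < C ∧ ∀ (B : ℕ) (N : ℤ), 1 ≤ B → N ≤ B →
      ∀ T : Finset (Fin 3 → ℤ), (∀ x ∈ T, F3 x = N) →
        (T.card : ℝ) ≤ C * (B : ℝ) ^ ((1 : ℝ) / 2 + ε) := by
  obtain ⟨C, hC, htwo⟩ := card_sum_two_sq_eq_le hε
  refine ⟨3 * C, by positivity, fun B N hB hNB T hT => ?_⟩
  have hB0 : (0 : ℝ) < B := by exact_mod_cast hB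
  have hsqrt : (Nat.sqrt B : ℝ) ≤ (B : ℝ) ^ ((1 : ℝ) / 2) := by
    rw [← Real.sqrt_eq_rpow]
    exact Real.nat_sqrt_le_real_sqrt
  have hone : (1 : ℝ) ≤ (B : ℝ) ^ ((1 : ℝ) / 2) :=
    Real.one_le_rpow (by exact_mod_cast hB) (by norm_num)
  have himage : ((T.image (fun x => x 0)).card : ℝ) ≤ 3 * (B : ℝ) ^ ((1 : ℝ) / 2) := by
    have hsub : T.image (fun x => x 0) ⊆ Finset.Icc (-(Nat.sqrt B : ℤ)) (Nat.sqrt B) := by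
      intro y hy
      obtain ⟨x, hx, rfl⟩ := Finset.mem_image.1 hy
      have h := hT x hx
      rw [F3] at h
      have hle : (x 0).natAbs ^ 2 ≤ B := by
        zify
        rw [sq_abs]
        nlinarith [sq_nonneg (x 1), sq_nonneg (x 2)]
      have := Nat.le_sqrt'.2 hle
      rw [Finset.mem_Icc]
      omega
    have hcard := Finset.card_le_card hsub
    rw [Int.card_Icc] at hcard
    have : ((T.image (fun x => x 0)).card : ℝ) ≤ 2 * Nat.sqrt B + 1 := by
      have : (T.image (fun x => x 0)).card ≤ 2 * Nat.sqrt B + 1 := by omega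
      exact_mod_cast this
    linarith
  rw [Real.rpow_add hB0]
  refine (Finset.card_le_mul_of_card_fiber_le T (fun x => x 0) (b := C * (B : ℝ) ^ ε)
    (by positivity) himage fun y _ => ?_).trans (le_of_eq (by ring))
  set T' := T.filter (fun x => x 0 = y)
  have hinj : Set.InjOn (fun x : Fin 3 → ℤ => (x 1, x 2)) T' := by
    intro x hx x' hx' h
    have h0 := (Finset.mem_filter.1 hx).2
    have h0' := (Finset.mem_filter.1 hx').2
    rw [Prod.ext_iff] at h
    funext i
    fin_cases i
    · exact h0.trans h0'.symm
    · exact h.1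
    · exact h.2
  rw [← Finset.card_image_of_injOn hinj]
  refine htwo B (N - y ^ 2) hB (by nlinarith [sq_nonneg y]) _ fun q hq => ?_
  obtain ⟨x, hx, rfl⟩ := Finset.mem_image.1 hq
  obtain ⟨hxT, rfl⟩ := Finset.mem_filter.1 hx
  rw [← hT x hxT, F3]
  ring

theorem card_F3_le_sq_dvd_le {ε : ℝ} (hε : 0 < ε) :
    ∃ C : ℝ, 0 < C ∧ ∀ B k : ℕ, 1 ≤ B → 1 ≤ k →
      ∀ T : Finset (Fin 3 → ℤ), (∀ x ∈ T, F3 x ≤ B ∧ x ≠ 0 ∧ (k : ℤ) ^ 2 ∣ F3 x) →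
        (T.card : ℝ) ≤ C * (B : ℝ) ^ ((3 : ℝ) / 2 + ε) * ((k : ℝ) ^ 2)⁻¹ := by
  obtain ⟨C, hC, hthree⟩ := card_F3_eq_le hε
  refine ⟨C, hC, fun B k hB hk T hT => ?_⟩
  have hB0 : (0 : ℝ) < B := by exact_mod_cast hB
  have hk2 : (0 : ℤ) < (k : ℤ) ^ 2 := by positivity
  have himage : ((T.image F3).card : ℝ) ≤ B * ((k : ℝ) ^ 2)⁻¹ := by
    have hsub : T.image F3 ⊆
        (Finset.Icc 1 (B / k ^ 2)).image (fun j : ℕ => (k : ℤ) ^ 2 * j) := by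
      intro y hy
      obtain ⟨x, hx, rfl⟩ := Finset.mem_image.1 hy
      obtain ⟨hle, hne, j, hj⟩ := hT x hx
      have hpos : 0 < F3 x := by
        refine lt_of_le_of_ne (by unfold F3; positivity) fun h => hne ?_
        rw [F3] at h
        funext i
        fin_cases i <;> simp only [Pi.zero_apply] <;>
          apply pow_eq_zero_iff (two_ne_zero) |>.1 <;>
          simp <;>
          nlinarith [sq_nonneg (x 0), sq_nonneg (x 1), sq_nonneg (x 2)]
      have hj0 : 0 < j := by
        rw [hj] at hpos
        exact pos_of_mul_pos_right hpos hk2.le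
      lift j to ℕ using hj0.le
      refine Finset.mem_image.2 ⟨j, Finset.mem_Icc.2 ⟨by exact_mod_cast hj0, ?_⟩, hj.symm⟩
      rw [Nat.le_div_iff_mul_le (by positivity), mul_comm]
      rw [hj] at hle
      exact_mod_cast hle
    have hcard : (T.image F3).card ≤ B / k ^ 2 :=
      (Finset.card_le_card hsub).trans (Finset.card_image_le.trans (by simp))
    calc ((T.image F3).card : ℝ) ≤ ((B / k ^ 2 : ℕ) : ℝ) := by exact_mod_cast hcard
      _ ≤ (B : ℝ) / ((k ^ 2 : ℕ) : ℝ) := Nat.cast_div_le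
      _ = _ := by rw [div_eq_mul_inv, Nat.cast_pow]
  refine (Finset.card_le_mul_of_card_fiber_le T F3 (b := C * (B : ℝ) ^ ((1 : ℝ) / 2 + ε))
    (by positivity) himage fun y hy => ?_).trans (le_of_eq ?_)
  · obtain ⟨x, hx, rfl⟩ := Finset.mem_image.1 hy
    exact hthree B _ hB (hT x hx).1 _ fun x' hx' => (Finset.mem_filter.1 hx').2
  · rw [show (3 : ℝ) / 2 + ε = 1 + (1 / 2 + ε) by ring, Real.rpow_add hB0 1, Real.rpow_one]
    ring

theorem sum_inv_sq_filter_lt_le {Y : ℝ} (hY : 0 < Y) (n : ℕ) :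
    ∑ k ∈ (Finset.Icc 1 n).filter (fun k : ℕ => Y < (k : ℝ)), ((k : ℝ) ^ 2)⁻¹ ≤ 2 / Y := by
  calc _ ≤ ∑ k ∈ Finset.Ioo ⌊Y⌋₊ (n + 1), ((k : ℝ) ^ 2)⁻¹ := by
        refine Finset.sum_le_sum_of_subset_of_nonneg (fun k hk => ?_) fun _ _ _ => by positivity
        rw [Finset.mem_filter, Finset.mem_Icc] at hk
        rw [Finset.mem_Ioo]
        exact ⟨(Nat.floor_lt hY.le).2 hk.2, by omega⟩
    _ ≤ 2 / (⌊Y⌋₊ + 1) := sum_Ioo_inv_sq_le _ _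
    _ ≤ 2 / Y := by
        gcongr
        exact (Nat.lt_floor_add_one Y).le


/-- truncation estimate, Lemma 3.2: the tail sum
`S₂ = ∑_{k > X^η} #{(m,n) : |m|² ≤ 2(X+l), |n|² ≤ 2X, n ≠ 0, k² ∣ F(n), F(m) - F(n) = l}`
satisfies `S₂ ≪_ε X^{3/2-η}(X+l)^{1/2+ε}`. -/
theorem stmt_12 (η ε : ℝ) (hη : 0 < η) (hε : 0 < ε) :
    ∃ C : ℝ, 0 < C ∧ ∀ X l : ℕ, 2 ≤ X →
      (∑ k ∈ (Finset.Icc 1 (2 * X)).filter (fun k : ℕ => (X : ℝ) ^ η < (k : ℝ)),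
        ((((Fintype.piFinset (fun _ : Fin 3 => Finset.Icc (-(2 * ((X : ℤ) + l))) (2 * ((X : ℤ) + l)))) ×ˢ
            (Fintype.piFinset (fun _ : Fin 3 => Finset.Icc (-(2 * (X : ℤ))) (2 * (X : ℤ))))).filter
          (fun p => F3 p.1 ≤ 2 * ((X : ℤ) + l) ∧ F3 p.2 ≤ 2 * (X : ℤ) ∧ p.2 ≠ 0 ∧
            ((k : ℤ)) ^ 2 ∣ F3 p.2 ∧ F3 p.1 - F3 p.2 = l)).card : ℝ))
      ≤ C * (X : ℝ) ^ ((3:ℝ)/2 - η) * ((X : ℝ) + (l : ℝ)) ^ ((1:ℝ)/2 + ε) := by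
  obtain ⟨C₁, hC₁, hm⟩ := card_F3_eq_le (half_pos hε)
  obtain ⟨C₂, hC₂, hn⟩ := card_F3_le_sq_dvd_le (half_pos hε)
  set D : ℝ := C₁ * 2 ^ ((1 : ℝ) / 2 + ε / 2) * (C₂ * 2 ^ ((3 : ℝ) / 2 + ε / 2)) with hD
  refine ⟨2 * D, by positivity, fun X l hX => ?_⟩
  have hX0 : (0 : ℝ) < X := by exact_mod_cast (by omega : 0 < X)
  have hXl : (0 : ℝ) < (X : ℝ) + l := by positivity
  set E : ℝ := D * (X : ℝ) ^ ((3 : ℝ) / 2 + ε / 2) * ((X : ℝ) + l) ^ ((1 : ℝ) / 2 + ε / 2) with hE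
  have hterm : ∀ k ∈ (Finset.Icc 1 (2 * X)).filter (fun k : ℕ => (X : ℝ) ^ η < (k : ℝ)),
      ((((Fintype.piFinset (fun _ : Fin 3 => Finset.Icc (-(2 * ((X : ℤ) + l))) (2 * ((X : ℤ) + l)))) ×ˢ
            (Fintype.piFinset (fun _ : Fin 3 => Finset.Icc (-(2 * (X : ℤ))) (2 * (X : ℤ))))).filter
          (fun p => F3 p.1 ≤ 2 * ((X : ℤ) + l) ∧ F3 p.2 ≤ 2 * (X : ℤ) ∧ p.2 ≠ 0 ∧
            ((k : ℤ)) ^ 2 ∣ F3 p.2 ∧ F3 p.1 - F3 p.2 = l)).card : ℝ) ≤ E * ((k : ℝ) ^ 2)⁻¹ := by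
    intro k hk
    have hk1 : 1 ≤ k := (Finset.mem_Icc.1 (Finset.mem_filter.1 hk).1).1
    refine (Finset.card_le_mul_of_card_fiber_le _ (fun p => p.2)
      (b := C₁ * ((2 * (X + l) : ℕ) : ℝ) ^ ((1 : ℝ) / 2 + ε / 2)) (by positivity)
      (hn (2 * X) k (by omega) hk1 _ fun x hx => ?_) fun y _ => ?_).trans (le_of_eq ?_)
    · obtain ⟨p, hp, rfl⟩ := Finset.mem_image.1 hx
      obtain ⟨_, _, hle, hne, hdvd, _⟩ := Finset.mem_filter.1 hp
      exact ⟨by exact_mod_cast hle, hne, hdvd⟩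
    · set T' := Finset.filter (fun p : (Fin 3 → ℤ) × (Fin 3 → ℤ) => p.2 = y) _
      have hT' : ∀ p ∈ T', p.2 = y ∧ F3 p.1 ≤ 2 * ((X : ℤ) + l) ∧ F3 p.1 = F3 y + l := by
        intro p hp
        obtain ⟨hpT, rfl⟩ := Finset.mem_filter.1 hp
        obtain ⟨_, hle, _, _, _, heq⟩ := Finset.mem_filter.1 hpT
        exact ⟨rfl, hle, by linarith⟩
      have hinj : Set.InjOn Prod.fst (T' : Set ((Fin 3 → ℤ) × (Fin 3 → ℤ))) :=
        fun p hp q hq h => Prod.ext h ((hT' p hp).1.trans (hT' q hq).1.symm)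
      rcases T'.eq_empty_or_nonempty with h | ⟨p, hp⟩
      · rw [h, Finset.card_empty, Nat.cast_zero]
        positivity
      · rw [← Finset.card_image_of_injOn hinj]
        refine hm (2 * (X + l)) (F3 y + l) (by omega) ?_ _ fun x hx => ?_
        · rw [← (hT' p hp).2.2]
          exact_mod_cast (hT' p hp).2.1
        · obtain ⟨q, hq, rfl⟩ := Finset.mem_image.1 hx
          exact (hT' q hq).2.2
    · push_cast
      rw [Real.mul_rpow two_pos.le hX0.le, Real.mul_rpow two_pos.le hXl.le, hE, hD]
      ring
  have hXη : (0 : ℝ) < (X : ℝ) ^ η := by positivity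
  calc _ ≤ ∑ k ∈ (Finset.Icc 1 (2 * X)).filter (fun k : ℕ => (X : ℝ) ^ η < (k : ℝ)),
        E * ((k : ℝ) ^ 2)⁻¹ := Finset.sum_le_sum hterm
    _ ≤ E * (2 / (X : ℝ) ^ η) := by
        rw [← Finset.mul_sum]
        gcongr
        exact sum_inv_sq_filter_lt_le hXη _
    _ = 2 * D * (X : ℝ) ^ ((3 : ℝ) / 2 - η) *
        ((X : ℝ) ^ (ε / 2) * ((X : ℝ) + l) ^ ((1 : ℝ) / 2 + ε / 2)) := by
        rw [hE, Real.rpow_add hX0, Real.rpow_sub hX0]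
        ring
    _ ≤ 2 * D * (X : ℝ) ^ ((3 : ℝ) / 2 - η) *
        (((X : ℝ) + l) ^ (ε / 2) * ((X : ℝ) + l) ^ ((1 : ℝ) / 2 + ε / 2)) := by
        gcongr
        exact le_add_of_nonneg_right l.cast_nonneg
    _ = _ := by
        rw [← Real.rpow_add hXl]
        ring_nf
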